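/- arXiv:0804.0201 — 3 statements merged into one kernel-verified Lean document; each statement's English description precedes it below -/
import Mathlib

section
/- Let n ≥ 1 and let B ∈ GL(n, ℤ) act on ℤⁿ. Form the semidirect product group G = ℤⁿ ⋊_B ℤ, with operation (v, a)·(w, b) = (v + Bᵃ·w, a + b). If G contains a nilpotent subgroup of finite index, then every complex eigenvalue of B is a root of unity. -/
open Matrix

/-- The semidirect product `ℤⁿ ⋊_B ℤ` for `B ∈ GL(n, ℤ)`, with underlying set `ℤⁿ × ℤ`
and operation `(v, a)·(w, b) = (v + Bᵃ·w, a + b)`. -/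
def LatGrp (n : ℕ) (_B : Matrix.GeneralLinearGroup (Fin n) ℤ) : Type := (Fin n → ℤ) × ℤ

namespace LatGrp

variable {n : ℕ}

instance (n : ℕ) (B : Matrix.GeneralLinearGroup (Fin n) ℤ) : Group (LatGrp n B) where
  mul g h := (g.1 + ((B ^ g.2 : Matrix.GeneralLinearGroup (Fin n) ℤ) :
      Matrix (Fin n) (Fin n) ℤ).mulVec h.1, g.2 + h.2)
  one := ((0 : Fin n → ℤ), (0 : ℤ))
  inv g := (-((B ^ (-g.2) : Matrix.GeneralLinearGroup (Fin n) ℤ) :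
      Matrix (Fin n) (Fin n) ℤ).mulVec g.1, -g.2)
  mul_assoc a b c := by
    show ((a.1 + ((B ^ a.2 : Matrix.GeneralLinearGroup (Fin n) ℤ) :
            Matrix (Fin n) (Fin n) ℤ).mulVec b.1)
          + ((B ^ (a.2 + b.2) : Matrix.GeneralLinearGroup (Fin n) ℤ) :
            Matrix (Fin n) (Fin n) ℤ).mulVec c.1, (a.2 + b.2) + c.2)
        = (a.1 + ((B ^ a.2 : Matrix.GeneralLinearGroup (Fin n) ℤ) :
            Matrix (Fin n) (Fin n) ℤ).mulVec
            (b.1 + ((B ^ b.2 : Matrix.GeneralLinearGroup (Fin n) ℤ) :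
              Matrix (Fin n) (Fin n) ℤ).mulVec c.1), a.2 + (b.2 + c.2))
    rw [_root_.zpow_add, Units.val_mul, Matrix.mulVec_add, Matrix.mulVec_mulVec, add_assoc, add_assoc]
  one_mul a := by
    show ((0 : Fin n → ℤ) + ((B ^ (0:ℤ) : Matrix.GeneralLinearGroup (Fin n) ℤ) :
        Matrix (Fin n) (Fin n) ℤ).mulVec a.1, (0:ℤ) + a.2) = a
    simp
    rfl
  mul_one a := by
    show (a.1 + ((B ^ a.2 : Matrix.GeneralLinearGroup (Fin n) ℤ) :
        Matrix (Fin n) (Fin n) ℤ).mulVec 0, a.2 + 0) = a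
    simp
    rfl
  inv_mul_cancel a := by
    show (-((B ^ (-a.2) : Matrix.GeneralLinearGroup (Fin n) ℤ) :
          Matrix (Fin n) (Fin n) ℤ).mulVec a.1
        + ((B ^ (-a.2) : Matrix.GeneralLinearGroup (Fin n) ℤ) :
          Matrix (Fin n) (Fin n) ℤ).mulVec a.1, -a.2 + a.2)
        = ((0 : Fin n → ℤ), (0 : ℤ))
    simp

end LatGrp

/-!
If `t` and `x` lie in a nilpotent subgroup `H`, then iterating `y ↦ ⁅t, y⁆` on `x` reaches `1`
after boundedly many steps. When `H` has finite index in `ℤⁿ ⋊_B ℤ`, it contains a power `tᵐ` of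
the generator `t` of `ℤ` and a nonzero multiple of every lattice vector. On lattice vectors
`y ↦ ⁅tᵐ, y⁆` is the linear map `Bᵐ - 1`, which is therefore nilpotent because `ℤⁿ` is
torsion-free. Hence `zᵐ = 1` for every eigenvalue `z` of `B`.
-/

open scoped commutatorElement

section Commutator

variable {G : Type*} [Group G] {H : Subgroup G}

theorem iterate_commutator_mem_lowerCentralSeries {t x : G} (ht : t ∈ H) (hx : x ∈ H) (j : ℕ) :
    (⁅t, ·⁆)^[j] x ∈ H.lowerCentralSeries j := by
  induction j with
  | zero => exact hx
  | succ j ih =>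
    rw [Function.iterate_succ_apply', Subgroup.lowerCentralSeries_succ, Subgroup.commutator_comm]
    exact Subgroup.commutator_mem_commutator ht ih

theorem exists_iterate_commutator_pow_eq_one (hnil : Group.IsNilpotent H) (hfin : H.FiniteIndex)
    (t : G) : ∃ m, 0 < m ∧ ∃ c : ℕ, ∀ x : G, ∃ k, 0 < k ∧ (⁅t ^ m, ·⁆)^[c] (x ^ k) = 1 := by
  have exists_pow_mem (g : G) : ∃ k, 0 < k ∧ g ^ k ∈ H :=
    (Subgroup.exists_pow_mem_of_index_ne_zero hfin.index_ne_zero g).imp fun _ h => ⟨h.1, h.2.2⟩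
  obtain ⟨m, hm, htm⟩ := exists_pow_mem t
  obtain ⟨c, hc⟩ := (Subgroup.isNilpotent_iff_lowerCentralSeries H).mp hnil
  refine ⟨m, hm, c, fun x => ?_⟩
  obtain ⟨k, hk, hxk⟩ := exists_pow_mem x
  refine ⟨k, hk, ?_⟩
  rw [← Subgroup.mem_bot, ← hc]
  exact iterate_commutator_mem_lowerCentralSeries htm hxk c

end Commutator

section Spectrum

variable {K A : Type*} [Field K] [Ring A] [Algebra K A] {a : A} {z : K}

theorem eq_zero_of_mem_spectrum_of_isNilpotent (ha : IsNilpotent a) (hz : z ∈ spectrum K a) :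
    z = 0 := by
  by_contra hz0
  have hunit : IsUnit (algebraMap K A z) := (IsUnit.mk0 z hz0).map (algebraMap K A)
  rw [spectrum.mem_iff, sub_eq_add_neg] at hz
  exact hz <| ha.neg.isUnit_add_left_of_commute hunit (Algebra.commutes z (-a)).symm

theorem pow_eq_one_of_mem_spectrum_of_isNilpotent_pow_sub_one {m : ℕ}
    (ha : IsNilpotent (a ^ m - 1)) (hz : z ∈ spectrum K a) : z ^ m = 1 := by
  have hmem : z ^ m - 1 ∈ spectrum K (a ^ m - 1) := by
    rw [spectrum.mem_iff, map_sub, map_one, sub_sub_sub_cancel_right]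
    exact spectrum.pow_mem_pow a m hz
  exact sub_eq_zero.mp (eq_zero_of_mem_spectrum_of_isNilpotent ha hmem)

end Spectrum

namespace LatGrp

variable {n : ℕ} (B : Matrix.GeneralLinearGroup (Fin n) ℤ)

/-- The element `(v, a)` of `ℤⁿ ⋊_B ℤ`, typed so that products of such elements use the group
operation of the semidirect product rather than the componentwise one. -/
def mk (v : Fin n → ℤ) (a : ℤ) : LatGrp n B := (v, a)

theorem mk_mul_mk (v w : Fin n → ℤ) (a b : ℤ) :
    mk B v a * mk B w b =
      mk B (v + ((B ^ a : Matrix.GeneralLinearGroup (Fin n) ℤ) :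
        Matrix (Fin n) (Fin n) ℤ) *ᵥ w) (a + b) :=
  rfl

/-- The inclusion `v ↦ (v, 0)` of the normal subgroup `ℤⁿ` into `ℤⁿ ⋊_B ℤ`, with the lattice
written multiplicatively so that it is a group homomorphism. -/
def translation : Multiplicative (Fin n → ℤ) →* LatGrp n B :=
  MonoidHom.mk' (fun v => mk B v.toAdd 0) fun v w => by simp [mk_mul_mk]

theorem translation_ofAdd (v : Fin n → ℤ) : translation B (.ofAdd v) = mk B v 0 :=
  rfl

theorem translation_injective : Function.Injective (translation B) :=
  fun _ _ h => congrArg Prod.fst h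

/-- The generator `(0, 1)` of the factor `ℤ` of `ℤⁿ ⋊_B ℤ`; conjugation by it acts on the lattice
as `B`. -/
def stableLetter : LatGrp n B := mk B 0 1

theorem stableLetter_semiconjBy_translation (v : Fin n → ℤ) :
    SemiconjBy (stableLetter B) (translation B (.ofAdd v))
      (translation B (.ofAdd ((B : Matrix (Fin n) (Fin n) ℤ) *ᵥ v))) := by
  simp [SemiconjBy, translation_ofAdd, stableLetter, mk_mul_mk]

theorem stableLetter_pow_semiconjBy_translation (m : ℕ) (v : Fin n → ℤ) :
    SemiconjBy (stableLetter B ^ m) (translation B (.ofAdd v))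
      (translation B (.ofAdd ((B : Matrix (Fin n) (Fin n) ℤ) ^ m *ᵥ v))) := by
  induction m with
  | zero => simp
  | succ m ih =>
    rw [pow_succ', pow_succ', ← Matrix.mulVec_mulVec]
    exact (stableLetter_semiconjBy_translation B _).mul_left ih

theorem commutator_stableLetter_pow_translation (m : ℕ) (v : Fin n → ℤ) :
    ⁅stableLetter B ^ m, translation B (.ofAdd v)⁆ =
      translation B (.ofAdd (((B : Matrix (Fin n) (Fin n) ℤ) ^ m - 1) *ᵥ v)) := by
  rw [commutatorElement_def, (stableLetter_pow_semiconjBy_translation B m v).eq,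
    mul_inv_cancel_right, ← map_inv, ← map_mul, Matrix.sub_mulVec, Matrix.one_mulVec, ofAdd_sub,
    div_eq_mul_inv]

theorem iterate_commutator_stableLetter_pow_translation (m j : ℕ) (v : Fin n → ℤ) :
    (⁅stableLetter B ^ m, ·⁆)^[j] (translation B (.ofAdd v)) =
      translation B (.ofAdd (((B : Matrix (Fin n) (Fin n) ℤ) ^ m - 1) ^ j *ᵥ v)) := by
  induction j with
  | zero => simp
  | succ j ih =>
    rw [Function.iterate_succ_apply', ih, commutator_stableLetter_pow_translation,
      Matrix.mulVec_mulVec, pow_succ']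

variable {B}

theorem exists_isNilpotent_pow_sub_one {H : Subgroup (LatGrp n B)} (hnil : Group.IsNilpotent H)
    (hfin : H.FiniteIndex) :
    ∃ m, 0 < m ∧ IsNilpotent ((B : Matrix (Fin n) (Fin n) ℤ) ^ m - 1) := by
  obtain ⟨m, hm, c, hc⟩ := exists_iterate_commutator_pow_eq_one hnil hfin (stableLetter B)
  refine ⟨m, hm, c, Matrix.mulVec_injective (funext fun v => ?_)⟩
  obtain ⟨k, hk, hkv⟩ := hc (translation B (.ofAdd v))
  rw [← map_pow, ← ofAdd_nsmul, iterate_commutator_stableLetter_pow_translation,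
    map_eq_one_iff _ (translation_injective B), ofAdd_eq_one, Matrix.mulVec_smul] at hkv
  rw [Matrix.zero_mulVec]
  exact (smul_eq_zero.mp hkv).resolve_left hk.ne'

end LatGrp

/-- If the semidirect product `ℤⁿ ⋊_B ℤ` (for `B ∈ GL(n, ℤ)`) contains a nilpotent subgroup
of finite index, then every complex eigenvalue of `B` is a root of unity. -/
theorem stmt4 (n : ℕ) (hn : 1 ≤ n) (B : Matrix.GeneralLinearGroup (Fin n) ℤ)
    (h : ∃ H : Subgroup (LatGrp n B), Group.IsNilpotent H ∧ H.FiniteIndex) :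
    ∀ z : ℂ, (((B : Matrix (Fin n) (Fin n) ℤ).map (Int.cast : ℤ → ℂ)).charpoly).IsRoot z →
      ∃ m : ℕ, 0 < m ∧ z ^ m = 1 := by
  obtain ⟨H, hnil, hfin⟩ := h
  obtain ⟨m, hm, hB⟩ := LatGrp.exists_isNilpotent_pow_sub_one hnil hfin
  intro z hz
  have hBℂ : IsNilpotent ((B : Matrix (Fin n) (Fin n) ℤ).map (Int.cast : ℤ → ℂ) ^ m - 1) := by
    have hmap := hB.map (Int.castRingHom ℂ).mapMatrix
    rwa [map_sub, map_pow, map_one] at hmap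
  exact ⟨m, hm, pow_eq_one_of_mem_spectrum_of_isNilpotent_pow_sub_one hBℂ
    (Matrix.mem_spectrum_iff_isRoot_charpoly.mpr hz)⟩
end

section
/- Let k ≥ 1 and let r ∈ ℂ be a root of the polynomial X^(2k) + 3·X^k + 1. Then |log |r|| < 1/k. Consequently, for n = 2k, every root r of this polynomial satisfies |log |r|| < 2/n. -/
/-!
In `z = r ^ k` the equation reads `z ^ 2 + 3 * z + 1 = 0`, whose roots are `-φ ^ 2` and `-ψ ^ 2`,
where `φ` is the golden ratio and `ψ = -φ⁻¹` its conjugate. Hence `k * |log ‖r‖| = 2 * log φ`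
exactly, and `2 * log φ < 1` because `φ ^ 2 = φ + 1 < e`.
-/

open scoped goldenRatio

theorem two_mul_log_goldenRatio_lt_one : 2 * Real.log φ < 1 := by
  have sqrt_five_lt : √5 < 2.4 := by
    rw [Real.sqrt_lt' (by norm_num)]
    norm_num
  have sq_lt_exp_one : φ ^ 2 < Real.exp 1 :=
    calc φ ^ 2 = (3 + √5) / 2 := by rw [Real.goldenRatio_sq, Real.goldenRatio]; ring
      _ < 2.7 := by linarith
      _ < Real.exp 1 := lt_trans (by norm_num) Real.exp_one_gt_d9
  calc 2 * Real.log φ = Real.log (φ ^ 2) := by rw [Real.log_pow, Nat.cast_ofNat]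
    _ < 1 := (Real.log_lt_iff_lt_exp (pow_pos Real.goldenRatio_pos 2)).mpr sq_lt_exp_one

theorem log_goldenConj : Real.log ψ = -Real.log φ := by
  rw [← Real.log_inv, Real.inv_goldenRatio, Real.log_neg_eq_log]

theorem eq_neg_goldenRatio_sq_or_eq_neg_goldenConj_sq {z : ℂ} (hz : z ^ 2 + 3 * z + 1 = 0) :
    z = -(φ : ℂ) ^ 2 ∨ z = -(ψ : ℂ) ^ 2 := by
  have sum_eq : (φ : ℂ) + ψ = 1 := mod_cast Real.goldenRatio_add_goldenConj
  have prod_eq : (φ : ℂ) * ψ = -1 := mod_cast Real.goldenRatio_mul_goldenConj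
  have factored : (z + (φ : ℂ) ^ 2) * (z + (ψ : ℂ) ^ 2) = 0 := by
    linear_combination hz + z * (φ + ψ + 1) * sum_eq + (φ * ψ - 1 - 2 * z) * prod_eq
  simpa only [mul_eq_zero, add_eq_zero_iff_eq_neg] using factored

theorem log_norm_neg_ofReal_sq (x : ℝ) : Real.log ‖-(x : ℂ) ^ 2‖ = 2 * Real.log x := by
  rw [norm_neg, norm_pow, Complex.norm_real, Real.log_pow, Real.norm_eq_abs, Real.log_abs,
    Nat.cast_ofNat]

theorem abs_log_norm_eq_two_mul_log_goldenRatio {z : ℂ} (hz : z ^ 2 + 3 * z + 1 = 0) :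
    |Real.log ‖z‖| = 2 * Real.log φ := by
  have log_pos : 0 < Real.log φ := Real.log_pos Real.one_lt_goldenRatio
  rcases eq_neg_goldenRatio_sq_or_eq_neg_goldenConj_sq hz with rfl | rfl
  · rw [log_norm_neg_ofReal_sq, abs_of_pos (by positivity)]
  · rw [log_norm_neg_ofReal_sq, log_goldenConj, mul_neg, abs_neg, abs_of_pos (by positivity)]

theorem mul_abs_log_norm_eq_two_mul_log_goldenRatio {k : ℕ} {r : ℂ}
    (hr : r ^ (2 * k) + 3 * r ^ k + 1 = 0) : k * |Real.log ‖r‖| = 2 * Real.log φ := by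
  rw [mul_comm 2 k, pow_mul] at hr
  rw [← abs_log_norm_eq_two_mul_log_goldenRatio hr, norm_pow, Real.log_pow, abs_mul, Nat.abs_cast]

/-- If `r ∈ ℂ` is a root of `X^(2k) + 3·X^k + 1` (with `k ≥ 1`), then `|log |r|| < 1/k`;
consequently, with `n = 2k`, every root satisfies `|log |r|| < 2/n`. -/
theorem stmt10 (k : ℕ) (hk : 1 ≤ k) (r : ℂ) (hr : r ^ (2 * k) + 3 * r ^ k + 1 = 0) :
    |Real.log ‖r‖| < 1 / (k : ℝ) ∧
      ∀ n : ℕ, n = 2 * k → |Real.log ‖r‖| < 2 / (n : ℝ) := by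
  have k_pos : (0 : ℝ) < k := Nat.cast_pos.mpr hk
  have bound : |Real.log ‖r‖| < 1 / (k : ℝ) := by
    rw [lt_div_iff₀' k_pos, mul_abs_log_norm_eq_two_mul_log_goldenRatio hr]
    exact two_mul_log_goldenRatio_lt_one
  refine ⟨bound, ?_⟩
  rintro n rfl
  have two_div_eq : (2 : ℝ) / ((2 * k : ℕ) : ℝ) = 1 / k := by
    push_cast
    field_simp
  rwa [two_div_eq]
end

section
/- For every k ≥ 1, the polynomial X^(2k) + 3·X^k + 1 (with rational coefficients) is squarefree; equivalently, it has 2k distinct roots in ℂ. -/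
open Polynomial

/-!
The trinomial `a X ^ (2k) + b X ^ k + c` is `q (X ^ k)` for the quadratic `q = a X² + b X + c`, and
`q` is separable because its discriminant is a unit. The derivative of `q (X ^ k)` is
`k X ^ (k - 1) q' (X ^ k)`: here `q' (X ^ k)` is coprime to `q (X ^ k)` since `q'` is coprime to
`q`, while `X` is coprime to `q (X ^ k)` since `q 0 = c` is a unit. Hence substituting `X ^ k`
preserves separability as long as `k` is invertible.
-/

section CommRing

variable {R : Type*} [CommRing R]

lemma separable_quadratic_of_isUnit_discrim {a b c : R} (h : IsUnit (discrim a b c)) :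
    (C a * X ^ 2 + C b * X + C c).Separable := by
  obtain ⟨u, hu⟩ := h.exists_left_inv
  have discrim_eq : (2 * C a * X + C b) ^ 2 - 4 * C a * (C a * X ^ 2 + C b * X + C c) =
      C (discrim a b c) := by
    simp only [discrim, map_mul, map_sub, map_pow, map_ofNat]
    ring
  have derivative_eq : derivative (C a * X ^ 2 + C b * X + C c) = 2 * C a * X + C b := by
    simp only [derivative_add, derivative_C_mul, derivative_X_sq, derivative_X, derivative_C,
      map_ofNat]
    ring
  have hCu : C u * C (discrim a b c) = 1 := by rw [← C_mul, hu, C_1]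
  refine ⟨-4 * C u * C a, C u * (2 * C a * X + C b), ?_⟩
  rw [derivative_eq]
  linear_combination C u * discrim_eq + hCu

lemma isCoprime_X_of_isUnit_coeff_zero {p : R[X]} (h : IsUnit (p.coeff 0)) : IsCoprime p X := by
  have hC : IsCoprime (C (p.coeff 0)) X :=
    isCoprime_one_left.of_isCoprime_of_dvd_left (h.map C).dvd
  simpa only [add_comm, divX_mul_X_add] using hC.add_mul_right_left p.divX

lemma separable_expand_of_isUnit {p : R[X]} {k : ℕ} (hp : p.Separable)
    (h₀ : IsUnit (p.coeff 0)) (hk : IsUnit (k : R)) : (expand R k p).Separable := by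
  have coprime_derivative : IsCoprime (expand R k p) (expand R k (derivative p)) :=
    IsCoprime.map hp (expand R k).toRingHom
  have coprime_X_pow : IsCoprime (expand R k p) (X ^ k) := by
    simpa only [AlgHom.toRingHom_eq_coe, RingHom.coe_coe, expand_X] using
      (isCoprime_X_of_isUnit_coeff_zero h₀).map (expand R k).toRingHom
  have isUnit_natCast : IsUnit (k : R[X]) := by simpa only [map_natCast] using hk.map C
  rw [separable_def, derivative_expand]
  refine coprime_derivative.mul_right ((isCoprime_mul_unit_left_right isUnit_natCast _ _).2 ?_)
  exact coprime_X_pow.of_isCoprime_of_dvd_right (pow_dvd_pow X (k.sub_le 1))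

lemma expand_quadratic (k : ℕ) (a b c : R) :
    expand R k (C a * X ^ 2 + C b * X + C c) = C a * X ^ (2 * k) + C b * X ^ k + C c := by
  simp only [map_add, map_mul, map_pow, expand_C, expand_X, ← pow_mul']

end CommRing

section Field

variable {K L : Type*} [Field K] [Field L] [Algebra K L] [IsAlgClosed L] [DecidableEq L]

lemma card_toFinset_roots_map_of_separable {p : K[X]} (hp : p.Separable) :
    (p.map (algebraMap K L)).roots.toFinset.card = p.natDegree := by
  rw [Multiset.toFinset_card_of_nodup (nodup_roots hp.map),
    ← (IsAlgClosed.splits _).natDegree_eq_card_roots, natDegree_map]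

theorem stmt11_general {k : ℕ} (hk : (k : K) ≠ 0) {a b c : K} (ha : a ≠ 0) (hc : c ≠ 0)
    (hdiscrim : discrim a b c ≠ 0) :
    Squarefree (C a * X ^ (2 * k) + C b * X ^ k + C c) ∧
      ((C a * X ^ (2 * k) + C b * X ^ k + C c).map
          (algebraMap K L)).roots.toFinset.card = 2 * k := by
  have hcoeff : IsUnit ((C a * X ^ 2 + C b * X + C c).coeff 0) := by simpa using hc
  have hsep : (expand K k (C a * X ^ 2 + C b * X + C c)).Separable :=
    separable_expand_of_isUnit (separable_quadratic_of_isUnit_discrim hdiscrim.isUnit)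
      hcoeff hk.isUnit
  rw [← expand_quadratic]
  refine ⟨hsep.squarefree, ?_⟩
  rw [card_toFinset_roots_map_of_separable hsep, natDegree_expand, natDegree_quadratic ha, mul_comm]

end Field

/-- For every `k ≥ 1`, the polynomial `X^(2k) + 3·X^k + 1 ∈ ℚ[X]` is squarefree;
equivalently, it has `2k` distinct roots in `ℂ`. -/
theorem stmt11 (k : ℕ) (hk : 1 ≤ k) :
    Squarefree (X ^ (2 * k) + C 3 * X ^ k + 1 : ℚ[X]) ∧
      ((X ^ (2 * k) + C 3 * X ^ k + 1 : ℚ[X]).map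
          (algebraMap ℚ ℂ)).roots.toFinset.card = 2 * k := by
  have hk₀ : (k : ℚ) ≠ 0 := Nat.cast_ne_zero.2 (Nat.one_le_iff_ne_zero.1 hk)
  simpa only [C_1, one_mul] using stmt11_general (L := ℂ) hk₀ (a := 1) (b := 3) (c := 1)
    one_ne_zero one_ne_zero (by norm_num [discrim])
end
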